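/- Let Ω ⊆ ℝ^m be open, γ ∈ (0,1], and let f : Ω → ℝ^{2n+1} be a map with finite Korányi γ-Hölder constant [f]_γ (i.e. f ∈ C^{0,γ}(Ω; ℍ^n)). Suppose the ball B^m(x_0, 2r) is contained in Ω. Then for every 0 < ε < r and every p ∈ B^m(x_0, r), the mollification f_ε = f * η_ε satisfies |(f_ε^*α)(p)| ≤ 4^γ · ‖∇η‖_{L^1} · ([f]_{γ,2ε,B^m(x_0,2r)})^2 · ε^{2γ−1}, where [f]_{γ,2ε,B^m(x_0,2r)} = sup{ d_K(f(x), f(y))/|x−y|^γ : x, y ∈ B^m(x_0,2r), 0 < |x−y| < 2ε }. -/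

import Mathlib

open Metric Set MeasureTheory Topology

/-- The index of the coordinate `x_j` in `ℝ^{2n+1}`. -/
def xI (n : ℕ) (j : Fin n) : Fin (2*n+1) := ⟨2*j.1, by have := j.2; omega⟩

/-- The index of the coordinate `y_j` in `ℝ^{2n+1}`. -/
def yI (n : ℕ) (j : Fin n) : Fin (2*n+1) := ⟨2*j.1+1, by have := j.2; omega⟩

/-- The index of the coordinate `t` in `ℝ^{2n+1}`. -/
def tI (n : ℕ) : Fin (2*n+1) := Fin.last (2*n)

/-- The Korányi metric on the Heisenberg group `ℍ^n = ℝ^{2n+1}`: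
`d_K(p,q) = (|z-z'|^4 + |t - t' + 2 ∑_j (x_j' y_j - x_j y_j')|^2)^{1/4}`. -/
noncomputable def dK (n : ℕ) (p q : EuclideanSpace ℝ (Fin (2*n+1))) : ℝ :=
  ((∑ i : Fin (2*n), (p (Fin.castSucc i) - q (Fin.castSucc i)) ^ 2) ^ 2 +
    (p (tI n) - q (tI n) +
      2 * ∑ j : Fin n, (q (xI n j) * p (yI n j) - p (xI n j) * q (yI n j))) ^ 2) ^ ((1:ℝ)/4)

/-- The Euclidean distance between the projections of `p, q ∈ ℝ^{2n+1}` onto the first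
`2n` coordinates. -/
noncomputable def edistProj (n : ℕ) (p q : EuclideanSpace ℝ (Fin (2*n+1))) : ℝ :=
  Real.sqrt (∑ i : Fin (2*n), (p (Fin.castSucc i) - q (Fin.castSucc i)) ^ 2)

/-- The `ε`-mollification `f_ε = f * η_ε` of `f`, where `η_ε(z) = ε^{-m} η(z/ε)`. -/
noncomputable def mollify (m d : ℕ) (η : EuclideanSpace ℝ (Fin m) → ℝ) (ε : ℝ)
    (f : EuclideanSpace ℝ (Fin m) → EuclideanSpace ℝ (Fin d))
    (p : EuclideanSpace ℝ (Fin m)) : EuclideanSpace ℝ (Fin d) :=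
  ∫ z, ((ε ^ m)⁻¹ * η (ε⁻¹ • z)) • f (p - z)

/-- The pullback `g^*α` of the standard contact form
`α = dt + 2 ∑_j (x_j dy_j - y_j dx_j)`, identified with the `ℝ^m`-valued map
`g^*α(p) = ∇g^t(p) + 2 ∑_j (g^{x_j}(p)·∇g^{y_j}(p) - g^{y_j}(p)·∇g^{x_j}(p))`. -/
noncomputable def pullA (n m : ℕ)
    (g : EuclideanSpace ℝ (Fin m) → EuclideanSpace ℝ (Fin (2*n+1)))
    (p : EuclideanSpace ℝ (Fin m)) : EuclideanSpace ℝ (Fin m) :=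
  gradient (fun q => g q (tI n)) p +
    (2:ℝ) • ∑ j : Fin n,
      (g p (xI n j) • gradient (fun q => g q (yI n j)) p -
        g p (yI n j) • gradient (fun q => g q (xI n j)) p)

/-! Write `α_q` for the contact form at `q`. As `∫ ∇η_ε = 0`, for `q = f_ε(p)` we have
`f_ε^*α(p) = ∫ α_q(f(p - z) - q) ∇η_ε(z) dz`. For fixed `a`, the number `α_q(a - q)` is affine in
`q`, so the coefficient at `z` is itself the `η_ε`-average over `z'` of the vertical coordinates of
`f(p - z')⁻¹ f(p - z)`, each of which is at most `d_K(f(p - z), f(p - z'))²`, with `p - z` and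
`p - z'` less than `2ε` apart. -/

open scoped Convolution
open ContinuousLinearMap (lsmul)
open Module (finrank)

section Convolution

theorem norm_integral_smul_le_mul_integral_norm {X G : Type*} [MeasurableSpace X] {μ : Measure X}
    [NormedAddCommGroup G] [NormedSpace ℝ G] {c : X → ℝ} {g : X → G} {K : ℝ}
    (hg : Integrable g μ) (hc : ∀ x ∈ Function.support g, |c x| ≤ K) :
    ‖∫ x, c x • g x ∂μ‖ ≤ K * ∫ x, ‖g x‖ ∂μ := by
  rw [← integral_const_mul]
  refine norm_integral_le_of_norm_le (hg.norm.const_mul K) (.of_forall fun x => ?_)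
  rw [norm_smul, Real.norm_eq_abs]
  by_cases hx : g x = 0
  · simp [hx]
  · exact mul_le_mul_of_nonneg_right (hc x hx) (norm_nonneg _)

theorem convolution_eventuallyEq_of_eqOn_ball {E F : Type*} [NormedAddCommGroup E]
    [MeasurableSpace E] {μ : Measure E} [NormedAddCommGroup F] [NormedSpace ℝ F]
    {φ : E → ℝ} {f g : E → F} {p : E} {ε r : ℝ} (hφ : Function.support φ ⊆ closedBall 0 ε)
    (hεr : ε < r) (hfg : EqOn f g (ball p r)) :
    φ ⋆[lsmul ℝ ℝ, μ] f =ᶠ[𝓝 p] φ ⋆[lsmul ℝ ℝ, μ] g := by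
  filter_upwards [ball_mem_nhds p (sub_pos.2 hεr)] with q hq
  refine integral_congr_ae (.of_forall fun z => ?_)
  by_cases hz : φ z = 0
  · simp [hz]
  · have hzε : ‖z‖ ≤ ε := by simpa using hφ hz
    have hmem : q - z ∈ ball p r := by
      rw [mem_ball, dist_eq_norm] at hq ⊢
      rw [sub_right_comm]
      linarith [norm_sub_le (q - p) z]
    simp only [hfg hmem]

theorem support_subset_interior_tsupport {X M : Type*} [TopologicalSpace X] [TopologicalSpace M]
    [Zero M] [T1Space M] {φ : X → M} (hφ : Continuous φ) :
    Function.support φ ⊆ interior (tsupport φ) :=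
  interior_maximal (subset_tsupport φ) hφ.isOpen_support

variable {E F : Type*} [NormedAddCommGroup E] [NormedSpace ℝ E] [NormedAddCommGroup F]
  [NormedSpace ℝ F]

theorem support_fderiv_subset_interior_tsupport {φ : E → F} (hφ : ContDiff ℝ 1 φ) :
    Function.support (fderiv ℝ φ) ⊆ interior (tsupport φ) :=
  interior_maximal (support_fderiv_subset ℝ) (hφ.continuous_fderiv one_ne_zero).isOpen_support

theorem integrable_fderiv_of_hasCompactSupport [MeasurableSpace E] [OpensMeasurableSpace E]
    {μ : Measure E} [IsFiniteMeasureOnCompacts μ] {φ : E → F} (hφ : ContDiff ℝ 1 φ)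
    (hc : HasCompactSupport φ) : Integrable (fderiv ℝ φ) μ :=
  (hφ.continuous_fderiv one_ne_zero).integrable_of_hasCompactSupport (hc.fderiv ℝ)

variable [FiniteDimensional ℝ E] [MeasurableSpace E] [BorelSpace E] {μ : Measure E}
  [μ.IsAddHaarMeasure] {φ : E → ℝ}

theorem integral_fderiv_eq_zero (hφ : ContDiff ℝ 1 φ) (hc : HasCompactSupport φ) :
    ∫ z, fderiv ℝ φ z ∂μ = 0 := by
  have hint := integrable_fderiv_of_hasCompactSupport (μ := μ) hφ hc
  ext w
  rw [ContinuousLinearMap.integral_apply hint]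
  simpa using integral_mul_fderiv_eq_neg_fderiv_mul_of_integrable (μ := μ) (v := w)
    (f := fun _ => (1 : ℝ)) (g := φ) (by simp) (by simpa using hint.apply_continuousLinearMap w)
    (by simpa using hφ.continuous.integrable_of_hasCompactSupport hc) (by simp)
    fun _ _ => (hφ.differentiable one_ne_zero).differentiableAt

variable [CompleteSpace F] {f : E → F}

theorem map_convolution_sub (ℓ : F →L[ℝ] ℝ) (v : F) (hφ : Continuous φ) (hc : HasCompactSupport φ)
    (hφ1 : ∫ z, φ z ∂μ = 1) (hf : LocallyIntegrable f μ) (p : E) :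
    ℓ ((φ ⋆[lsmul ℝ ℝ, μ] f) p - v) = ∫ z, ℓ (f (p - z) - v) • φ z ∂μ := by
  have hφi : Integrable φ μ := hφ.integrable_of_hasCompactSupport hc
  have hint : Integrable (fun z => φ z • f (p - z)) μ :=
    hc.convolutionExists_left (lsmul ℝ ℝ) hφ hf p
  have hsub : (φ ⋆[lsmul ℝ ℝ, μ] f) p - v = ∫ z, φ z • (f (p - z) - v) ∂μ := by
    simp_rw [smul_sub]
    rw [integral_sub hint (hφi.smul_const v), integral_smul_const, hφ1, one_smul, convolution_lsmul]
  have hint' : Integrable (fun z => φ z • (f (p - z) - v)) μ := by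
    simp_rw [smul_sub]
    exact hint.sub (hφi.smul_const v)
  rw [hsub, ← ℓ.integral_comp_comm hint']
  simp [mul_comm]

theorem comp_fderiv_convolution (ℓ : F →L[ℝ] ℝ) (v : F) (hφ : ContDiff ℝ 1 φ)
    (hc : HasCompactSupport φ) (hf : LocallyIntegrable f μ) (p : E) :
    ℓ ∘L fderiv ℝ (φ ⋆[lsmul ℝ ℝ, μ] f) p = ∫ z, ℓ (f (p - z) - v) • fderiv ℝ φ z ∂μ := by
  have hφ' := hφ.continuous_fderiv one_ne_zero
  have hint := (hc.fderiv ℝ).convolutionExists_left ((lsmul ℝ ℝ : ℝ →L[ℝ] F →L[ℝ] F).precompL E)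
    hφ' hf p
  have hpoint : ∀ z, ℓ ∘L (lsmul ℝ ℝ : ℝ →L[ℝ] F →L[ℝ] F).precompL E (fderiv ℝ φ z) (f (p - z)) =
      ℓ (f (p - z)) • fderiv ℝ φ z := fun z => by
    ext w
    simp [mul_comm]
  have hint' : Integrable (fun z => ℓ (f (p - z)) • fderiv ℝ φ z) μ := by
    simpa only [ContinuousLinearMap.compL_apply, hpoint] using
      (ContinuousLinearMap.compL ℝ E F ℝ ℓ).integrable_comp hint
  calc ℓ ∘L fderiv ℝ (φ ⋆[lsmul ℝ ℝ, μ] f) p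
      = ∫ z, ℓ (f (p - z)) • fderiv ℝ φ z ∂μ := by
        rw [(hc.hasFDerivAt_convolution_left (lsmul ℝ ℝ) hφ hf p).fderiv, convolution_def,
          ← ContinuousLinearMap.compL_apply, ← ContinuousLinearMap.integral_comp_comm _ hint]
        simp only [ContinuousLinearMap.compL_apply, hpoint]
    _ = ∫ z, ℓ (f (p - z) - v) • fderiv ℝ φ z ∂μ := by
        simp_rw [map_sub, sub_smul]
        rw [integral_sub hint' ((integrable_fderiv_of_hasCompactSupport hφ hc).fun_smul _),
          integral_smul, integral_fderiv_eq_zero hφ hc, smul_zero, sub_zero]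

end Convolution

section ContactForm

/-- The standard contact form `α` of `ℍ^n` at the point `q`. The number `contactForm n q (p - q)` is
the vertical coordinate of `q⁻¹ * p`, i.e. the term that `dK` raises to the power `2`. -/
noncomputable def contactForm (n : ℕ) (q : EuclideanSpace ℝ (Fin (2 * n + 1))) :
    EuclideanSpace ℝ (Fin (2 * n + 1)) →L[ℝ] ℝ :=
  EuclideanSpace.proj (tI n) + (2 : ℝ) • ∑ j : Fin n,
    (q (xI n j) • EuclideanSpace.proj (yI n j) - q (yI n j) • EuclideanSpace.proj (xI n j))

variable {n : ℕ}

theorem contactForm_apply (q v : EuclideanSpace ℝ (Fin (2 * n + 1))) :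
    contactForm n q v =
      v (tI n) + 2 * ∑ j : Fin n, (q (xI n j) * v (yI n j) - q (yI n j) * v (xI n j)) := by
  simp [contactForm]

theorem contactForm_sub (p q : EuclideanSpace ℝ (Fin (2 * n + 1))) :
    contactForm n q (p - q) = p (tI n) - q (tI n) +
      2 * ∑ j : Fin n, (q (xI n j) * p (yI n j) - p (xI n j) * q (yI n j)) := by
  rw [contactForm_apply]
  refine congrArg (_ + 2 * ·) (Finset.sum_congr rfl fun j _ => ?_)
  simp only [PiLp.sub_apply]
  ring

theorem contactForm_sub_comm (p q : EuclideanSpace ℝ (Fin (2 * n + 1))) :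
    contactForm n q (p - q) = -contactForm n p (q - p) := by
  have hsum : ∑ j : Fin n, (q (xI n j) * p (yI n j) - p (xI n j) * q (yI n j)) =
      -∑ j : Fin n, (p (xI n j) * q (yI n j) - q (xI n j) * p (yI n j)) := by
    simp only [← Finset.sum_neg_distrib, neg_sub]
  rw [contactForm_sub, contactForm_sub, hsum]
  ring

theorem dK_nonneg (p q : EuclideanSpace ℝ (Fin (2 * n + 1))) : 0 ≤ dK n p q := by
  unfold dK
  positivity

theorem dK_pow_four (p q : EuclideanSpace ℝ (Fin (2 * n + 1))) :
    dK n p q ^ 4 = (∑ i : Fin (2 * n), (p i.castSucc - q i.castSucc) ^ 2) ^ 2 +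
      contactForm n q (p - q) ^ 2 := by
  rw [contactForm_sub, dK, ← Real.rpow_natCast, ← Real.rpow_mul (by positivity)]
  norm_num

theorem abs_contactForm_sub_le (p q : EuclideanSpace ℝ (Fin (2 * n + 1))) :
    |contactForm n q (p - q)| ≤ dK n p q ^ 2 := by
  refine abs_le_of_sq_le_sq ?_ (by positivity)
  rw [← pow_mul, dK_pow_four]
  exact le_add_of_nonneg_left (by positivity)

theorem abs_sub_castSucc_le (p q : EuclideanSpace ℝ (Fin (2 * n + 1))) (i : Fin (2 * n)) :
    |p i.castSucc - q i.castSucc| ≤ dK n p q := by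
  have hi : (p i.castSucc - q i.castSucc) ^ 2 ≤
      ∑ i : Fin (2 * n), (p i.castSucc - q i.castSucc) ^ 2 :=
    Finset.single_le_sum (f := fun i : Fin (2 * n) => (p i.castSucc - q i.castSucc) ^ 2)
      (fun _ _ => sq_nonneg _) (Finset.mem_univ i)
  refine le_of_pow_le_pow_left₀ four_ne_zero (dK_nonneg p q) ?_
  calc |p i.castSucc - q i.castSucc| ^ 4
      = ((p i.castSucc - q i.castSucc) ^ 2) ^ 2 := by rw [← sq_abs (_ - _), ← pow_mul]
    _ ≤ (∑ i : Fin (2 * n), (p i.castSucc - q i.castSucc) ^ 2) ^ 2 := by gcongr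
    _ ≤ dK n p q ^ 4 := dK_pow_four p q ▸ le_add_of_nonneg_right (sq_nonneg _)

theorem tendsto_of_tendsto_dK {X : Type*} {l : Filter X}
    {u : X → EuclideanSpace ℝ (Fin (2 * n + 1))} {a : EuclideanSpace ℝ (Fin (2 * n + 1))}
    (h : Filter.Tendsto (fun x => dK n (u x) a) l (𝓝 0)) : Filter.Tendsto u l (𝓝 a) := by
  have hz : ∀ i : Fin (2 * n),
      Filter.Tendsto (fun x => u x i.castSucc) l (𝓝 (a i.castSucc)) := fun i =>
    tendsto_iff_dist_tendsto_zero.2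
      (squeeze_zero (fun _ => dist_nonneg) (fun x => abs_sub_castSucc_le (u x) a i) h)
  have hx : ∀ j, Filter.Tendsto (fun x => u x (xI n j)) l (𝓝 (a (xI n j))) := fun j =>
    hz ⟨2 * j, by omega⟩
  have hy : ∀ j, Filter.Tendsto (fun x => u x (yI n j)) l (𝓝 (a (yI n j))) := fun j =>
    hz ⟨2 * j + 1, by omega⟩
  have hα : Filter.Tendsto (fun x => contactForm n a (u x - a)) l (𝓝 0) :=
    squeeze_zero_norm (fun x => abs_contactForm_sub_le (u x) a) (by simpa using h.pow 2)
  have ht : Filter.Tendsto (fun x => u x (tI n)) l (𝓝 (a (tI n))) := by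
    have hsum : Filter.Tendsto (fun x => 2 * ∑ j : Fin n,
        (a (xI n j) * u x (yI n j) - u x (xI n j) * a (yI n j))) l (𝓝 0) := by
      have := (tendsto_finsetSum Finset.univ fun j _ =>
        ((hy j).const_mul (a (xI n j))).sub ((hx j).mul_const (a (yI n j)))).const_mul 2
      simpa using this
    have := (hα.sub hsum).add_const (a (tI n))
    simpa [contactForm_sub] using this
  exact ((PiLp.continuous_toLp 2 _).tendsto _).comp
    (tendsto_pi_nhds.2 (Fin.lastCases ht hz))

end ContactForm

section Holder

variable {n : ℕ} {X : Type*} [PseudoMetricSpace X] {s : Set X} {γ C δ : ℝ}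
  {f : X → EuclideanSpace ℝ (Fin (2 * n + 1))}

/-- The Korányi `γ`-Hölder seminorm `[f]_{γ,δ,s}` of `f` on `s` at scales below `δ`. It is `0` by
convention when the difference quotients are unbounded. -/
noncomputable def koranyiHolderSeminorm (n : ℕ) (γ δ : ℝ) (s : Set X)
    (f : X → EuclideanSpace ℝ (Fin (2 * n + 1))) : ℝ :=
  sSup {c : ℝ | ∃ x ∈ s, ∃ y ∈ s,
    0 < dist x y ∧ dist x y < δ ∧ c = dK n (f x) (f y) / dist x y ^ γ}

theorem continuousOn_of_dK_le (hγ : 0 < γ)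
    (hf : ∀ x ∈ s, ∀ y ∈ s, dK n (f x) (f y) ≤ C * dist x y ^ γ) : ContinuousOn f s := by
  intro x hx
  have hlim : Filter.Tendsto (fun y => C * dist y x ^ γ) (𝓝[s] x) (𝓝 0) := by
    have hcont : Continuous fun y => C * dist y x ^ γ :=
      continuous_const.mul ((continuous_id.dist continuous_const).rpow_const fun _ => .inr hγ.le)
    simpa [Real.zero_rpow hγ.ne'] using hcont.continuousWithinAt (s := s) (x := x).tendsto
  exact tendsto_of_tendsto_dK (squeeze_zero' (.of_forall fun _ => dK_nonneg _ _)
    (eventually_mem_nhdsWithin.mono fun y hy => hf y hy x hx) hlim)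

theorem koranyiHolderSeminorm_nonneg : 0 ≤ koranyiHolderSeminorm n γ δ s f := by
  refine Real.sSup_nonneg ?_
  rintro _ ⟨x, -, y, -, -, -, rfl⟩
  exact div_nonneg (dK_nonneg _ _) (by positivity)

theorem dK_le_koranyiHolderSeminorm_mul (hγ : γ ≠ 0)
    (hf : ∀ x ∈ s, ∀ y ∈ s, dK n (f x) (f y) ≤ C * dist x y ^ γ)
    {x y : X} (hx : x ∈ s) (hy : y ∈ s) (hxy : dist x y < δ) :
    dK n (f x) (f y) ≤ koranyiHolderSeminorm n γ δ s f * dist x y ^ γ := by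
  rcases dist_nonneg.eq_or_lt (b := dist x y) with hd | hd
  · simpa [← hd, Real.zero_rpow hγ] using hf x hx y hy
  · rw [← div_le_iff₀ (Real.rpow_pos_of_pos hd γ)]
    refine le_csSup ⟨C, ?_⟩ ⟨x, hx, y, hy, hd, hxy, rfl⟩
    rintro _ ⟨x, hx, y, hy, hd, -, rfl⟩
    exact (div_le_iff₀ (Real.rpow_pos_of_pos hd γ)).2 (hf x hx y hy)

theorem abs_contactForm_sub_le_koranyiHolderSeminorm (hγ : 0 < γ)
    (hf : ∀ x ∈ s, ∀ y ∈ s, dK n (f x) (f y) ≤ C * dist x y ^ γ)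
    {x y : X} (hx : x ∈ s) (hy : y ∈ s) (hxy : dist x y < δ) :
    |contactForm n (f y) (f x - f y)| ≤ (koranyiHolderSeminorm n γ δ s f * δ ^ γ) ^ 2 := by
  refine (abs_contactForm_sub_le _ _).trans (pow_le_pow_left₀ (dK_nonneg _ _) ?_ 2)
  refine (dK_le_koranyiHolderSeminorm_mul hγ.ne' hf hx hy hxy).trans ?_
  gcongr
  exact koranyiHolderSeminorm_nonneg

end Holder

section Pullback

variable {m n : ℕ}

theorem norm_gradient {E : Type*} [NormedAddCommGroup E] [InnerProductSpace ℝ E] [CompleteSpace E]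
    (φ : E → ℝ) (z : E) : ‖gradient φ z‖ = ‖fderiv ℝ φ z‖ :=
  (InnerProductSpace.toDual ℝ E).symm.norm_map _

theorem toDual_pullA {g : EuclideanSpace ℝ (Fin m) → EuclideanSpace ℝ (Fin (2 * n + 1))}
    {p : EuclideanSpace ℝ (Fin m)} (hg : DifferentiableAt ℝ g p) :
    InnerProductSpace.toDual ℝ _ (pullA n m g p) = contactForm n (g p) ∘L fderiv ℝ g p := by
  have hcoord : ∀ i, fderiv ℝ (fun q => g q i) p = EuclideanSpace.proj i ∘L fderiv ℝ g p := fun i =>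
    ((EuclideanSpace.proj (𝕜 := ℝ) i).hasFDerivAt.comp p hg.hasFDerivAt).fderiv
  ext w
  simp [pullA, hcoord, contactForm_apply]

theorem norm_pullA {g : EuclideanSpace ℝ (Fin m) → EuclideanSpace ℝ (Fin (2 * n + 1))}
    {p : EuclideanSpace ℝ (Fin m)} (hg : DifferentiableAt ℝ g p) :
    ‖pullA n m g p‖ = ‖contactForm n (g p) ∘L fderiv ℝ g p‖ := by
  rw [← toDual_pullA hg, LinearIsometryEquiv.norm_map]

theorem pullA_congr {g h : EuclideanSpace ℝ (Fin m) → EuclideanSpace ℝ (Fin (2 * n + 1))}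
    {p : EuclideanSpace ℝ (Fin m)} (hgh : g =ᶠ[𝓝 p] h) : pullA n m g p = pullA n m h p := by
  have hgrad : ∀ i, gradient (fun q => g q i) p = gradient (fun q => h q i) p := fun i =>
    (hgh.fun_comp fun v => v i).gradient_eq
  simp only [pullA, hgrad, hgh.eq_of_nhds]

end Pullback

section ContactConvolution

variable {n : ℕ} {E : Type*} [NormedAddCommGroup E] [NormedSpace ℝ E] [FiniteDimensional ℝ E]
  [MeasurableSpace E] [BorelSpace E] {μ : Measure E} [μ.IsAddHaarMeasure] {φ : E → ℝ}
  {f : E → EuclideanSpace ℝ (Fin (2 * n + 1))} {p : E} {K : ℝ}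

-- `q ↦ contactForm n q (a - q)` is affine by `contactForm_sub_comm`, so it commutes with averages.
theorem abs_contactForm_convolution_sub_le (hφ : Continuous φ) (hc : HasCompactSupport φ)
    (hφ1 : ∫ z, φ z ∂μ = 1) (hf : LocallyIntegrable f μ)
    {a : EuclideanSpace ℝ (Fin (2 * n + 1))}
    (hK : ∀ z ∈ Function.support φ, |contactForm n (f (p - z)) (a - f (p - z))| ≤ K) :
    |contactForm n ((φ ⋆[lsmul ℝ ℝ, μ] f) p) (a - (φ ⋆[lsmul ℝ ℝ, μ] f) p)| ≤
      K * ∫ z, ‖φ z‖ ∂μ := by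
  rw [contactForm_sub_comm, abs_neg, map_convolution_sub _ _ hφ hc hφ1 hf]
  refine norm_integral_smul_le_mul_integral_norm (hφ.integrable_of_hasCompactSupport hc)
    fun z hz => ?_
  rw [contactForm_sub_comm, abs_neg]
  exact hK z hz

theorem norm_contactForm_comp_fderiv_convolution_le (hφ : ContDiff ℝ 1 φ)
    (hc : HasCompactSupport φ) (hφ1 : ∫ z, φ z ∂μ = 1) (hf : LocallyIntegrable f μ)
    (hK : ∀ z ∈ interior (tsupport φ), ∀ z' ∈ interior (tsupport φ),
      |contactForm n (f (p - z')) (f (p - z) - f (p - z'))| ≤ K) :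
    ‖contactForm n ((φ ⋆[lsmul ℝ ℝ, μ] f) p) ∘L fderiv ℝ (φ ⋆[lsmul ℝ ℝ, μ] f) p‖ ≤
      K * (∫ z, ‖φ z‖ ∂μ) * ∫ z, ‖fderiv ℝ φ z‖ ∂μ := by
  rw [comp_fderiv_convolution _ ((φ ⋆[lsmul ℝ ℝ, μ] f) p) hφ hc hf]
  refine norm_integral_smul_le_mul_integral_norm (integrable_fderiv_of_hasCompactSupport hφ hc)
    fun z hz => abs_contactForm_convolution_sub_le hφ.continuous hc hφ1 hf fun z' hz' => ?_
  exact hK z (support_fderiv_subset_interior_tsupport hφ hz)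
    z' (support_subset_interior_tsupport hφ.continuous hz')

end ContactConvolution

section RescaledKernel

variable {E : Type*} [NormedAddCommGroup E] [NormedSpace ℝ E]

/-- The rescaled kernel `η_ε(z) = ε^{-dim E} η(z/ε)`. -/
noncomputable def rescaledKernel (η : E → ℝ) (ε : ℝ) (z : E) : ℝ :=
  (ε ^ finrank ℝ E)⁻¹ * η (ε⁻¹ • z)

variable {η : E → ℝ} {ε : ℝ}

theorem contDiff_rescaledKernel (hη : ContDiff ℝ 1 η) : ContDiff ℝ 1 (rescaledKernel η ε) := by
  unfold rescaledKernel
  fun_prop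

theorem support_rescaledKernel_subset (hη : Function.support η ⊆ closedBall 0 1) (hε : 0 < ε) :
    Function.support (rescaledKernel η ε) ⊆ closedBall 0 ε := by
  intro z hz
  have hz1 : ε⁻¹ • z ∈ closedBall 0 1 := hη (right_ne_zero_of_mul hz)
  rw [mem_closedBall_zero_iff, norm_smul, norm_inv, Real.norm_of_nonneg hε.le,
    inv_mul_le_iff₀ hε, mul_one] at hz1
  simpa using hz1

theorem interior_tsupport_rescaledKernel_subset (hη : Function.support η ⊆ closedBall 0 1)
    (hε : 0 < ε) : interior (tsupport (rescaledKernel η ε)) ⊆ ball 0 ε := by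
  rw [← interior_closedBall _ hε.ne']
  exact interior_mono (closure_minimal (support_rescaledKernel_subset hη hε) isClosed_closedBall)

theorem norm_rescaledKernel (hε : 0 ≤ ε) (z : E) :
    ‖rescaledKernel η ε z‖ = rescaledKernel (fun z => ‖η z‖) ε z := by
  rw [rescaledKernel, rescaledKernel, norm_mul, Real.norm_of_nonneg (by positivity)]

theorem norm_fderiv_rescaledKernel (hε : 0 ≤ ε) (z : E) :
    ‖fderiv ℝ (rescaledKernel η ε) z‖ =
      ε⁻¹ * rescaledKernel (fun z => ‖fderiv ℝ η z‖) ε z := by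
  have h : rescaledKernel η ε = (ε ^ finrank ℝ E)⁻¹ • fun z => η (ε⁻¹ • z) := rfl
  rw [h, fderiv_const_smul_field, Pi.smul_apply, fderiv_comp_smul, norm_smul, norm_smul,
    Real.norm_of_nonneg (by positivity), Real.norm_of_nonneg (by positivity), rescaledKernel,
    mul_left_comm]

theorem hasCompactSupport_rescaledKernel [ProperSpace E]
    (hη : Function.support η ⊆ closedBall 0 1) (hε : 0 < ε) :
    HasCompactSupport (rescaledKernel η ε) :=
  .of_support_subset_isCompact (isCompact_closedBall 0 ε) (support_rescaledKernel_subset hη hε)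

variable [FiniteDimensional ℝ E] [MeasurableSpace E] [BorelSpace E] {μ : Measure E}
  [μ.IsAddHaarMeasure]

theorem integral_rescaledKernel (hε : 0 < ε) :
    ∫ z, rescaledKernel η ε z ∂μ = ∫ z, η z ∂μ := by
  simp only [rescaledKernel]
  rw [integral_const_mul, Measure.integral_comp_inv_smul_of_nonneg _ _ hε.le, smul_eq_mul,
    inv_mul_cancel_left₀ (by positivity)]

theorem integral_norm_rescaledKernel (hε : 0 < ε) :
    ∫ z, ‖rescaledKernel η ε z‖ ∂μ = ∫ z, ‖η z‖ ∂μ := by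
  simp_rw [norm_rescaledKernel hε.le]
  exact integral_rescaledKernel hε

theorem integral_norm_fderiv_rescaledKernel (hε : 0 < ε) :
    ∫ z, ‖fderiv ℝ (rescaledKernel η ε) z‖ ∂μ = ε⁻¹ * ∫ z, ‖fderiv ℝ η z‖ ∂μ := by
  simp_rw [norm_fderiv_rescaledKernel hε.le]
  rw [integral_const_mul, integral_rescaledKernel hε]

end RescaledKernel

section Mollification

variable {m n : ℕ} {η : EuclideanSpace ℝ (Fin m) → ℝ} {ε : ℝ}

theorem mollify_eq_convolution (d : ℕ) (f : EuclideanSpace ℝ (Fin m) → EuclideanSpace ℝ (Fin d)) :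
    mollify m d η ε f = rescaledKernel η ε ⋆[lsmul ℝ ℝ] f := by
  ext1 p
  simp [mollify, convolution_lsmul, rescaledKernel]

theorem norm_pullA_mollify_le_of_contactForm_sub_le
    {f : EuclideanSpace ℝ (Fin m) → EuclideanSpace ℝ (Fin (2 * n + 1))}
    {p : EuclideanSpace ℝ (Fin m)} {r K : ℝ} (hf : ContinuousOn f (closedBall p r))
    (hη₁ : ContDiff ℝ 1 η) (hη₂ : Function.support η ⊆ closedBall 0 1) (hη₃ : ∫ z, η z = 1)
    (hε : 0 < ε) (hεr : ε < r)
    (hK : ∀ x ∈ ball p ε, ∀ y ∈ ball p ε, |contactForm n (f y) (f x - f y)| ≤ K) :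
    ‖pullA n m (mollify m (2 * n + 1) η ε f) p‖ ≤
      K * (∫ z, ‖η z‖) * (ε⁻¹ * ∫ z, ‖gradient η z‖) := by
  set F := (closedBall p r).indicator f
  have hF : LocallyIntegrable F :=
    ((hf.integrableOn_compact (isCompact_closedBall p r)).integrable_indicator
      isClosed_closedBall.measurableSet).locallyIntegrable
  have hfF : EqOn f F (ball p r) := fun x hx =>
    (indicator_of_mem (ball_subset_closedBall hx) f).symm
  have hmoll : mollify m (2 * n + 1) η ε f =ᶠ[𝓝 p] rescaledKernel η ε ⋆[lsmul ℝ ℝ] F :=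
    mollify_eq_convolution _ f ▸
      convolution_eventuallyEq_of_eqOn_ball (support_rescaledKernel_subset hη₂ hε) hεr hfF
  have hφ := contDiff_rescaledKernel (ε := ε) hη₁
  have hc := hasCompactSupport_rescaledKernel hη₂ hε
  rw [pullA_congr hmoll, norm_pullA
    (hc.hasFDerivAt_convolution_left (lsmul ℝ ℝ) hφ hF p).differentiableAt]
  simp_rw [norm_gradient]
  rw [← integral_norm_fderiv_rescaledKernel hε, ← integral_norm_rescaledKernel hε]
  refine norm_contactForm_comp_fderiv_convolution_le hφ hc
    ((integral_rescaledKernel hε).trans hη₃) hF fun z hz z' hz' => ?_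
  have hmem : ∀ z ∈ interior (tsupport (rescaledKernel η ε)), p - z ∈ ball p ε := fun z hz => by
    simpa using interior_tsupport_rescaledKernel_subset hη₂ hε hz
  rw [← hfF (ball_subset_ball hεr.le (hmem z hz)), ← hfF (ball_subset_ball hεr.le (hmem z' hz'))]
  exact hK _ (hmem z hz) _ (hmem z' hz')

theorem two_mul_rpow_sq_mul_inv (γ : ℝ) (hε : 0 < ε) :
    ((2 * ε) ^ γ) ^ 2 * ε⁻¹ = 4 ^ γ * ε ^ (2 * γ - 1) := by
  calc ((2 * ε) ^ γ) ^ 2 * ε⁻¹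
    _ = ((2 * ε) ^ 2) ^ γ * ε⁻¹ := by rw [Real.rpow_pow_comm (by positivity)]
    _ = 4 ^ γ * ((ε ^ γ) ^ 2 / ε) := by
      rw [mul_pow, Real.mul_rpow (by positivity) (by positivity), Real.rpow_pow_comm hε.le]
      norm_num
      ring
    _ = 4 ^ γ * ε ^ (2 * γ - 1) := by
      rw [Real.rpow_sub_one hε.ne', mul_comm 2 γ, Real.rpow_mul hε.le, Real.rpow_two]

theorem stmt6_general {s : Set (EuclideanSpace ℝ (Fin m))} {γ C : ℝ} (hγ : 0 < γ)
    {f : EuclideanSpace ℝ (Fin m) → EuclideanSpace ℝ (Fin (2 * n + 1))}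
    (hf : ∀ x ∈ s, ∀ y ∈ s, dK n (f x) (f y) ≤ C * dist x y ^ γ)
    {p : EuclideanSpace ℝ (Fin m)} {r : ℝ} (hs : closedBall p r ⊆ s)
    (hη₁ : ContDiff ℝ 1 η) (hη₂ : Function.support η ⊆ closedBall 0 1) (hη₃ : ∫ z, η z = 1)
    (hε : 0 < ε) (hεr : ε < r) :
    ‖pullA n m (mollify m (2 * n + 1) η ε f) p‖ ≤
      4 ^ γ * (∫ z, ‖η z‖) * (∫ z, ‖gradient η z‖) *
        koranyiHolderSeminorm n γ (2 * ε) s f ^ 2 * ε ^ (2 * γ - 1) := by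
  have hball : ball p ε ⊆ s := (ball_subset_ball hεr.le).trans (ball_subset_closedBall.trans hs)
  have hosc : ∀ x ∈ ball p ε, ∀ y ∈ ball p ε, |contactForm n (f y) (f x - f y)| ≤
      (koranyiHolderSeminorm n γ (2 * ε) s f * (2 * ε) ^ γ) ^ 2 := fun x hx y hy =>
    abs_contactForm_sub_le_koranyiHolderSeminorm hγ hf (hball hx) (hball hy) <| by
      linarith [dist_triangle_right x y p, mem_ball.1 hx, mem_ball.1 hy]
  refine (norm_pullA_mollify_le_of_contactForm_sub_le ((continuousOn_of_dK_le hγ hf).mono hs)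
    hη₁ hη₂ hη₃ hε hεr hosc).trans_eq ?_
  linear_combination koranyiHolderSeminorm n γ (2 * ε) s f ^ 2 * (∫ z, ‖η z‖) *
    (∫ z, ‖gradient η z‖) * two_mul_rpow_sq_mul_inv γ hε

end Mollification

/-- Theorem 8.2 of the paper. If `f ∈ C^{0,γ}(Ω;ℍ^n)` and
`B^m(x₀,2r) ⊆ Ω`, then for `0 < ε < r` and `p ∈ B^m(x₀,r)`,
`|(f_ε^*α)(p)| ≤ 4^γ ‖∇η‖₁ [f]_{γ,2ε,B(x₀,2r)}² ε^{2γ-1}`. -/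
theorem stmt6 (m n : ℕ) (Ω : Set (EuclideanSpace ℝ (Fin m))) (hΩ : IsOpen Ω)
    (γ : ℝ) (hγ0 : 0 < γ) (hγ1 : γ ≤ 1)
    (f : EuclideanSpace ℝ (Fin m) → EuclideanSpace ℝ (Fin (2*n+1))) (Cf : ℝ)
    (hf : ∀ x ∈ Ω, ∀ y ∈ Ω, dK n (f x) (f y) ≤ Cf * dist x y ^ γ)
    (x₀ : EuclideanSpace ℝ (Fin m)) (r : ℝ) (hr : 0 < r)
    (hball : ball x₀ (2*r) ⊆ Ω)
    (η : EuclideanSpace ℝ (Fin m) → ℝ)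
    (hη₁ : ContDiff ℝ (⊤ : ℕ∞) η) (hη₂ : Function.support η ⊆ closedBall 0 1)
    (hη₃ : ∀ z, 0 ≤ η z) (hη₄ : ∫ z, η z = 1)
    (ε : ℝ) (hε0 : 0 < ε) (hεr : ε < r)
    (p : EuclideanSpace ℝ (Fin m)) (hp : p ∈ ball x₀ r) :
    ‖pullA n m (mollify m (2*n+1) η ε f) p‖ ≤
      (4:ℝ) ^ γ * (∫ z, ‖gradient η z‖) *
        (sSup {c : ℝ | ∃ x ∈ ball x₀ (2*r), ∃ y ∈ ball x₀ (2*r),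
            0 < dist x y ∧ dist x y < 2*ε ∧ c = dK n (f x) (f y) / dist x y ^ γ}) ^ 2 *
        ε ^ (2*γ - 1) := by
  simpa only [koranyiHolderSeminorm, Real.norm_of_nonneg (hη₃ _), hη₄, mul_one] using
    stmt6_general hγ0 (fun x hx y hy => hf x (hball hx) y (hball hy))
      (closedBall_subset_ball' (by linarith [mem_ball.1 hp])) (hη₁.of_le (by norm_cast))
      hη₂ hη₄ hε0 hεr
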